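/- Let (X_n) be a reversible nearest-neighbour random walk in periodic environment on Z^d with p_x(e) > 0 for all x and all unit vectors e, with potential u and average negative gradient g, and suppose the induced chain ξ on T is aperiodic (it is automatically irreducible), with drift ν := Σ_{x∈T} π(x) Σ_{y∈Z^d} p_x(y) y. Then u(X_n)/n → −⟨g, ν⟩ almost surely as n → ∞; in particular, if g ≠ 0 then u(X_n) → −∞ almost surely: the potential decreases asymptotically along the trajectory. -/

import Mathlib

open MeasureTheory Filter Topology ProbabilityTheory

noncomputable section

/-- The torus `T = ℤ^d / (M₁ℤ × ⋯ × M_dℤ)`. -/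
abbrev Torus (d : ℕ) (Md : Fin d → ℕ) : Type := ∀ i : Fin d, ZMod (Md i)

/-- Projection of `ℤ^d` onto the torus, `x ↦ x mod M`. -/
def projT {d : ℕ} (Md : Fin d → ℕ) (x : Fin d → ℤ) : Torus d Md :=
  fun i => (x i : ZMod (Md i))

/-- A canonical representative in `ℤ^d` of a point of the torus. -/
def repT {d : ℕ} (Md : Fin d → ℕ) [∀ i, NeZero (Md i)] (t : Torus d Md) : Fin d → ℤ :=
  fun i => ((t i).val : ℤ)

/-- `p` is a periodic environment on `ℤ^d`: each `p x` is a probability distribution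
on `ℤ^d` (the jump distribution at `x`), and `x ↦ p x` is `M`-periodic. -/
def IsPeriodicEnv {d : ℕ} (Md : Fin d → ℕ) (p : (Fin d → ℤ) → (Fin d → ℤ) → ℝ) : Prop :=
  (∀ x y, 0 ≤ p x y) ∧ (∀ x, HasSum (p x) 1) ∧
    ∀ (x y : Fin d → ℤ) (i : Fin d), p (x + Pi.single i (Md i : ℤ)) y = p x y

/-- The transition matrix of the induced Markov chain on the torus:
`P a b = ∑_{z : ℤ^d, a + z ∼ b} p_a(z)` (the jump `z` leads from the class `a`
to the class `b` iff `a + (z mod M) = b`). -/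
def indMatrix {d : ℕ} (Md : Fin d → ℕ) [∀ i, NeZero (Md i)]
    (p : (Fin d → ℤ) → (Fin d → ℤ) → ℝ) : Matrix (Torus d Md) (Torus d Md) ℝ :=
  Matrix.of fun a b => ∑' z : Fin d → ℤ, if a + projT Md z = b then p (repT Md a) z else 0

/-- Irreducibility of a finite-state transition matrix: every state can be reached
from every state with positive probability in finitely many (positively many) steps. -/
def MatIrreducible {T : Type*} [Fintype T] [DecidableEq T] (P : Matrix T T ℝ) : Prop :=
  ∀ a b : T, ∃ n : ℕ, 0 < n ∧ 0 < (P ^ n) a b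

/-- Aperiodicity of a finite-state transition matrix: for every state, the gcd of
the possible return times is `1`. -/
def MatAperiodic {T : Type*} [Fintype T] [DecidableEq T] (P : Matrix T T ℝ) : Prop :=
  ∀ a : T, ∀ m : ℕ, (∀ n : ℕ, 0 < n → 0 < (P ^ n) a a → m ∣ n) → m = 1

/-- `π` is a stationary probability distribution for the transition matrix `P`. -/
def IsStationaryDist {T : Type*} [Fintype T] (P : Matrix T T ℝ) (π : T → ℝ) : Prop :=
  (∀ a, 0 ≤ π a) ∧ (∑ a, π a = 1) ∧ ∀ b, ∑ a, π a * P a b = π b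

/-- The drift vector `ν = ∑_{x ∈ T} π(x) ∑_{y ∈ ℤ^d} p_x(y) y`. -/
def driftVec {d : ℕ} (Md : Fin d → ℕ) [∀ i, NeZero (Md i)]
    (p : (Fin d → ℤ) → (Fin d → ℤ) → ℝ) (π : Torus d Md → ℝ) : Fin d → ℝ :=
  fun i => ∑ a : Torus d Md, π a * ∑' y : Fin d → ℤ, p (repT Md a) y * (y i : ℝ)

/-- `μ` is the law of the random walk in the environment `p` started at `x₀`,
as a probability measure on trajectory space: the probability of every cylinder set
is the corresponding product of one-step transition probabilities. -/
def IsRWPELaw {d : ℕ} (p : (Fin d → ℤ) → (Fin d → ℤ) → ℝ) (x₀ : Fin d → ℤ)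
    (μ : Measure (ℕ → (Fin d → ℤ))) : Prop :=
  IsProbabilityMeasure μ ∧
    ∀ (n : ℕ) (x : ℕ → (Fin d → ℤ)),
      μ {ω | ∀ i ≤ n, ω i = x i} =
        ENNReal.ofReal ((if x 0 = x₀ then (1 : ℝ) else 0) *
          ∏ i ∈ Finset.range n, p (x i) (x (i + 1) - x i))

/-- `e` is one of the `2d` unit vectors of `ℤ^d`. -/
def IsUnitVec {d : ℕ} (e : Fin d → ℤ) : Prop :=
  ∃ i : Fin d, e = Pi.single i 1 ∨ e = -Pi.single i 1

/-- The environment is nearest neighbour: only jumps to nearest neighbours have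
positive probability. -/
def IsNearestNeighbour {d : ℕ} (p : (Fin d → ℤ) → (Fin d → ℤ) → ℝ) : Prop :=
  ∀ x y, p x y ≠ 0 → IsUnitVec y

/-- The average negative gradient `g` of the potential,
`g_i = (1/M_i) ∑_{j=0}^{M_i - 1} log (p_{j eᵢ}(eᵢ) / p_{(j+1) eᵢ}(-eᵢ))`. -/
def avgNegGrad {d : ℕ} (Md : Fin d → ℕ) (p : (Fin d → ℤ) → (Fin d → ℤ) → ℝ) :
    Fin d → ℝ :=
  fun i => (Md i : ℝ)⁻¹ * ∑ j ∈ Finset.range (Md i),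
    Real.log (p (Pi.single i (j : ℤ)) (Pi.single i 1) /
      p (Pi.single i ((j : ℤ) + 1)) (-Pi.single i 1))

/-- The conditional expected jump `μ_{xy}` of the walk, given that the induced chain
jumps from `x` to `y`. -/
def condJump {d : ℕ} (Md : Fin d → ℕ) [∀ i, NeZero (Md i)]
    (p : (Fin d → ℤ) → (Fin d → ℤ) → ℝ) (a b : Torus d Md) : Fin d → ℝ :=
  if indMatrix Md p a b = 0 then 0
  else fun i =>
    (∑' z : Fin d → ℤ, if a + projT Md z = b then p (repT Md a) z * (z i : ℝ) else 0) /
      indMatrix Md p a b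

/-!
Adding to each coordinate of the walk a solution of a Poisson equation on the torus, evaluated at
the induced chain, and subtracting `n ν` gives a martingale with bounded increments; hence
`X_n / n → ν`. The decrements of `u` are `M`-periodic, so `u x + ⟨g, x⟩` only depends on the class
of `x` on the torus, and `u (X_n) / n → -⟨g, ν⟩`. Finally `⟨g, ν⟩` is the entropy production of the
induced chain, the relative entropy of the edge flow `π a * p_a e` with respect to the reversed
flow. It is nonnegative and vanishes only under detailed balance, which makes `u` periodic and so
forces `g = 0`.
-/

open scoped Matrix

section FiniteMarkovChain

variable {T : Type*} [Fintype T] {P : Matrix T T ℝ} {π : T → ℝ}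

theorem IsStationaryDist.vecMul_eq (hπ : IsStationaryDist P π) : π ᵥ* P = π :=
  funext hπ.2.2

theorem IsStationaryDist.dotProduct_mulVec (hπ : IsStationaryDist P π) (f : T → ℝ) :
    π ⬝ᵥ P *ᵥ f = π ⬝ᵥ f := by
  rw [Matrix.dotProduct_mulVec, hπ.vecMul_eq]

variable [DecidableEq T]

theorem MatIrreducible.eq_of_mulVec_eq_self (hP : P ∈ Matrix.rowStochastic ℝ T)
    (hirr : MatIrreducible P) {f : T → ℝ} (hf : P *ᵥ f = f) (a b : T) : f a = f b := by
  have : Nonempty T := ⟨a⟩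
  obtain ⟨m, hm⟩ := Finite.exists_max f
  suffices h : ∀ c, f c = f m from (h a).trans (h b).symm
  intro c
  obtain ⟨n, -, hn⟩ := hirr m c
  have hPn : P ^ n ∈ Matrix.rowStochastic ℝ T := pow_mem hP n
  have hfn : P ^ n *ᵥ f = f := by
    clear hn hPn
    induction n with
    | zero => simp
    | succ n ih => rw [pow_succ, ← Matrix.mulVec_mulVec, hf, ih]
  have hsum : ∑ b, (P ^ n) m b * (f m - f b) = 0 := by
    have hfm : ∑ b, (P ^ n) m b * f b = f m := congrFun hfn m
    simp only [mul_sub, Finset.sum_sub_distrib, ← Finset.sum_mul,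
      Matrix.sum_row_of_mem_rowStochastic hPn, hfm, one_mul, sub_self]
  have hterm := (Finset.sum_eq_zero_iff_of_nonneg fun b _ =>
    mul_nonneg (Matrix.nonneg_of_mem_rowStochastic hPn) (sub_nonneg.2 (hm b))).1 hsum c
      (Finset.mem_univ c)
  exact (sub_eq_zero.1 ((mul_eq_zero.1 hterm).resolve_left hn.ne')).symm

theorem IsStationaryDist.pos (hP : P ∈ Matrix.rowStochastic ℝ T) (hirr : MatIrreducible P)
    (hπ : IsStationaryDist P π) (b : T) : 0 < π b := by
  obtain ⟨a, ha⟩ : ∃ a, π a ≠ 0 := by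
    by_contra! h
    simpa [h] using hπ.2.1
  obtain ⟨n, -, hn⟩ := hirr a b
  have hPn : P ^ n ∈ Matrix.rowStochastic ℝ T := pow_mem hP n
  have hπn : π ᵥ* P ^ n = π := by
    clear hn hPn
    induction n with
    | zero => simp
    | succ n ih => rw [pow_succ, ← Matrix.vecMul_vecMul, ih, hπ.vecMul_eq]
  calc 0 < π a * (P ^ n) a b := mul_pos ((hπ.1 a).lt_of_ne' ha) hn
    _ ≤ ∑ c, π c * (P ^ n) c b := Finset.single_le_sum
        (f := fun c => π c * (P ^ n) c b)
        (fun c _ => mul_nonneg (hπ.1 c) (Matrix.nonneg_of_mem_rowStochastic hPn))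
        (Finset.mem_univ a)
    _ = π b := congrFun hπn b

/- Only the constants are harmonic, so `1 - P` has corank one, and its range is contained in the
hyperplane `π ⬝ᵥ · = 0`; hence the two coincide. -/
theorem IsStationaryDist.exists_poisson_solution (hP : P ∈ Matrix.rowStochastic ℝ T)
    (hirr : MatIrreducible P) (hπ : IsStationaryDist P π) (h : T → ℝ) :
    ∃ φ : T → ℝ, ∀ a, φ a - (P *ᵥ φ) a = h a - π ⬝ᵥ h := by
  let L : (T → ℝ) →ₗ[ℝ] T → ℝ := LinearMap.id - P.mulVecLin
  let Λ : Module.Dual ℝ (T → ℝ) := dotProductBilin ℝ ℝ π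
  have hΛ_one : Λ 1 = 1 := by simpa [Λ, dotProduct] using hπ.2.1
  have hrange : L.range ≤ Λ.ker := by
    rintro _ ⟨f, rfl⟩
    simp [L, Λ, dotProduct_sub, hπ.dotProduct_mulVec]
  have hker : L.ker ≤ Submodule.span ℝ {1} := by
    intro f hf
    have hf : P *ᵥ f = f := (sub_eq_zero.1 (LinearMap.mem_ker.1 hf)).symm
    rw [Submodule.mem_span_singleton]
    rcases isEmpty_or_nonempty T with _ | ⟨⟨t⟩⟩
    · exact ⟨0, Subsingleton.elim _ _⟩
    · exact ⟨f t, funext fun a => by simp [hirr.eq_of_mulVec_eq_self hP hf a t]⟩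
  have hrange_eq : L.range = Λ.ker := by
    have hker_le : Module.finrank ℝ L.ker ≤ 1 :=
      (Submodule.finrank_mono hker).trans (by simpa using finrank_span_le_card (R := ℝ) {1})
    have hL := L.finrank_range_add_finrank_ker
    have hΛ := Module.Dual.finrank_ker_add_one_of_ne_zero (f := Λ) fun h0 => by simp [h0] at hΛ_one
    exact Submodule.eq_of_le_of_finrank_le hrange (by lia)
  have hmem : h - Λ h • 1 ∈ L.range := by
    rw [hrange_eq, LinearMap.mem_ker, map_sub, map_smul, hΛ_one, smul_eq_mul, mul_one, sub_self]
  obtain ⟨φ, hφ⟩ := hmem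
  exact ⟨φ, fun a => by simpa [L, Λ] using congrFun hφ a⟩

end FiniteMarkovChain

open InformationTheory in
theorem sum_mul_log_div_pos {ι : Type*} {s : Finset ι} {A B : ι → ℝ} (hA : ∀ i ∈ s, 0 ≤ A i)
    (hB : ∀ i ∈ s, 0 < B i) (hle : ∑ i ∈ s, B i ≤ ∑ i ∈ s, A i) (hne : ∃ i ∈ s, A i ≠ B i) :
    0 < ∑ i ∈ s, A i * Real.log (A i / B i) := by
  have hterm : ∀ i ∈ s, A i * Real.log (A i / B i) = B i * klFun (A i / B i) + (A i - B i) := by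
    intro i hi
    have := (hB i hi).ne'
    rw [klFun_apply]
    field_simp
    ring
  have hratio : ∀ i ∈ s, 0 ≤ A i / B i := fun i hi => div_nonneg (hA i hi) (hB i hi).le
  have hkl : 0 < ∑ i ∈ s, B i * klFun (A i / B i) := by
    obtain ⟨j, hj, hj_ne⟩ := hne
    refine Finset.sum_pos' (fun i hi => mul_nonneg (hB i hi).le (klFun_nonneg (hratio i hi)))
      ⟨j, hj, mul_pos (hB j hj) ((klFun_nonneg (hratio j hj)).lt_of_ne' ?_)⟩
    rwa [Ne, klFun_eq_zero_iff (hratio j hj), div_eq_one_iff_eq (hB j hj).ne']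
  rw [Finset.sum_congr rfl hterm, Finset.sum_add_distrib, Finset.sum_sub_distrib]
  linarith

section StrongLaw

theorem tendsto_div_natCast_of_tendsto_sq {S : ℕ → ℝ} {C l : ℝ}
    (hC : ∀ n, -C ≤ S (n + 1) - S n)
    (hS : Tendsto (fun k : ℕ => S (k ^ 2) / (k : ℝ) ^ 2) atTop (𝓝 l)) :
    Tendsto (fun n : ℕ => S n / n) atTop (𝓝 l) := by
  have hadd : ∀ n : ℕ, n ≠ 0 → (S n + n * C) / n = S n / n + C := fun n hn => by
    have : (n : ℝ) ≠ 0 := by exact_mod_cast hn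
    field_simp
  have hratio : Tendsto (fun n : ℕ => (1 + 1 / (n : ℝ)) ^ 2) atTop (𝓝 1) := by
    simpa using (tendsto_one_div_atTop_nhds_zero_nat.const_add (1 : ℝ)).pow 2
  have hlim : Tendsto (fun n : ℕ => (S n + n * C) / n) atTop (𝓝 (l + C)) := by
    refine tendsto_div_of_monotone_of_exists_subseq_tendsto_div _ _
      (monotone_nat_of_le_succ fun n => ?_) fun a ha =>
        ⟨fun k => k ^ 2, ?_, tendsto_pow_atTop two_ne_zero, ?_⟩
    · have := hC n
      push_cast
      linarith
    · filter_upwards [hratio.eventually_lt_const ha, eventually_ne_atTop 0] with n hn hn0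
      have : (n : ℝ) ≠ 0 := by exact_mod_cast hn0
      calc (((n + 1) ^ 2 : ℕ) : ℝ) = (1 + 1 / (n : ℝ)) ^ 2 * (n : ℝ) ^ 2 := by
            push_cast; field_simp
        _ ≤ a * ((n ^ 2 : ℕ) : ℝ) := by push_cast; gcongr
    · refine (hS.add_const C).congr' ?_
      filter_upwards [eventually_ne_atTop 0] with n hn
      rw [hadd _ (pow_ne_zero 2 hn), Nat.cast_pow]
  refine ((hlim.sub_const C).congr' ?_).trans_eq (by rw [add_sub_cancel_right])
  filter_upwards [eventually_ne_atTop 0] with n hn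
  rw [hadd n hn, add_sub_cancel_right]

variable {Ω : Type*} {m0 : MeasurableSpace Ω} {μ : Measure Ω}

theorem ae_tendsto_zero_of_summable_integral_sq {Y : ℕ → Ω → ℝ}
    (hY : ∀ n, Integrable (fun ω => Y n ω ^ 2) μ) (hsum : Summable fun n => ∫ ω, Y n ω ^ 2 ∂μ) :
    ∀ᵐ ω ∂μ, Tendsto (fun n => Y n ω) atTop (𝓝 0) := by
  have hmeas : ∀ n, AEMeasurable (fun ω => ENNReal.ofReal (Y n ω ^ 2)) μ := fun n =>
    (hY n).aemeasurable.ennreal_ofReal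
  have hfin : ∫⁻ ω, ∑' n, ENNReal.ofReal (Y n ω ^ 2) ∂μ ≠ ⊤ := by
    rw [lintegral_tsum hmeas]
    simp only [← ofReal_integral_eq_lintegral_ofReal (hY _) (ae_of_all μ fun _ => sq_nonneg _)]
    exact hsum.tsum_ofReal_ne_top
  filter_upwards [ae_lt_top' (AEMeasurable.tsum hmeas) hfin] with ω hω
  have hsq : Tendsto (fun n => Y n ω ^ 2) atTop (𝓝 0) := by
    have := (ENNReal.tendsto_toReal ENNReal.zero_ne_top).comp
      (ENNReal.tendsto_atTop_zero_of_tsum_ne_top hω.ne)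
    simpa [Function.comp_def, ENNReal.toReal_ofReal (sq_nonneg _)] using this
  simpa [Real.sqrt_sq_eq_abs, tendsto_zero_iff_abs_tendsto_zero, Function.comp_def] using hsq.sqrt

variable {ℱ : Filtration ℕ m0} {f : ℕ → Ω → ℝ} {C : ℝ}

theorem ae_abs_le_of_ae_abs_sub_le (h0 : f 0 =ᵐ[μ] 0)
    (hC : ∀ n, ∀ᵐ ω ∂μ, |f (n + 1) ω - f n ω| ≤ C) (n : ℕ) : ∀ᵐ ω ∂μ, |f n ω| ≤ n * C := by
  induction n with
  | zero => filter_upwards [h0] with ω hω using by simp [hω]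
  | succ n ih =>
    filter_upwards [ih, hC n] with ω hn hstep
    calc |f (n + 1) ω| = |f n ω + (f (n + 1) ω - f n ω)| := by rw [add_sub_cancel]
      _ ≤ n * C + C := (abs_add_le _ _).trans (add_le_add hn hstep)
      _ = ((n + 1 : ℕ) : ℝ) * C := by push_cast; ring

variable [IsFiniteMeasure μ]

theorem integral_mul_martingale_sub_eq_zero (hf : Martingale f ℱ μ) {g : Ω → ℝ} {n : ℕ}
    (hg : StronglyMeasurable[ℱ n] g) {c : ℝ} (hgc : ∀ᵐ ω ∂μ, |g ω| ≤ c) :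
    ∫ ω, g ω * (f (n + 1) ω - f n ω) ∂μ = 0 := by
  have hint : Integrable (f (n + 1) - f n) μ := (hf.integrable _).sub (hf.integrable _)
  have hincr : μ[f (n + 1) - f n | ℱ n] =ᵐ[μ] 0 := by
    filter_upwards [condExp_sub (hf.integrable (n + 1)) (hf.integrable n) (ℱ n),
      hf.condExp_ae_eq n.le_succ, hf.condExp_ae_eq (le_refl n)] with ω hsub h1 h0
    simp [hsub, h1, h0]
  calc ∫ ω, g ω * (f (n + 1) ω - f n ω) ∂μ = ∫ ω, (μ[g * (f (n + 1) - f n) | ℱ n]) ω ∂μ :=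
        (integral_condExp (ℱ.le n)).symm
    _ = 0 := integral_eq_zero_of_ae <| by
        filter_upwards [condExp_stronglyMeasurable_mul_of_bound (ℱ.le n) hg hint c hgc, hincr]
          with ω hmul h0
        simp [hmul, h0]

theorem integrable_sq_of_ae_abs_le {g : Ω → ℝ} (hg : AEStronglyMeasurable g μ) {c : ℝ}
    (hgc : ∀ᵐ ω ∂μ, |g ω| ≤ c) : Integrable (fun ω => g ω ^ 2) μ :=
  .of_bound (hg.pow 2) (c ^ 2) <| by
    filter_upwards [hgc] with ω hω
    simpa using pow_le_pow_left₀ (abs_nonneg _) hω 2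

theorem integral_sq_le_of_martingale (hf : Martingale f ℱ μ) (h0 : f 0 =ᵐ[μ] 0)
    (hC : ∀ n, ∀ᵐ ω ∂μ, |f (n + 1) ω - f n ω| ≤ C) (n : ℕ) :
    ∫ ω, f n ω ^ 2 ∂μ ≤ n * (μ.real Set.univ * C ^ 2) := by
  have hbound := ae_abs_le_of_ae_abs_sub_le h0 hC
  have hmeas (n : ℕ) : AEStronglyMeasurable (f n) μ := (hf.integrable n).aestronglyMeasurable
  have hsq (n : ℕ) : Integrable (fun ω => f n ω ^ 2) μ :=
    integrable_sq_of_ae_abs_le (hmeas n) (hbound n)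
  induction n with
  | zero =>
    have : (fun ω => f 0 ω ^ 2) =ᵐ[μ] 0 := by
      filter_upwards [h0] with ω hω
      simp [hω]
    simp [integral_eq_zero_of_ae this]
  | succ n ih =>
    have hcross : Integrable (fun ω => f n ω * (f (n + 1) ω - f n ω)) μ :=
      ((hf.integrable _).sub (hf.integrable _)).bdd_mul (hmeas n) (hbound n)
    have hadd : Integrable
        (fun ω => f n ω ^ 2 + 2 * (f n ω * (f (n + 1) ω - f n ω))) μ :=
      (hsq n).add (hcross.const_mul 2)
    have hincr : ∀ᵐ ω ∂μ, (f (n + 1) ω - f n ω) ^ 2 ≤ C ^ 2 := by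
      filter_upwards [hC n] with ω hω
      simpa using pow_le_pow_left₀ (abs_nonneg _) hω 2
    have horth := integral_mul_martingale_sub_eq_zero hf (hf.stronglyMeasurable n) (hbound n)
    calc ∫ ω, f (n + 1) ω ^ 2 ∂μ
        ≤ ∫ ω, (f n ω ^ 2 + 2 * (f n ω * (f (n + 1) ω - f n ω)) + C ^ 2) ∂μ := by
          refine integral_mono_ae (hsq _) (hadd.add (integrable_const _)) ?_
          filter_upwards [hincr] with ω hω
          linear_combination hω
      _ = ∫ ω, f n ω ^ 2 ∂μ + μ.real Set.univ * C ^ 2 := by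
          rw [integral_add hadd (integrable_const _),
            integral_add (hsq n) (hcross.const_mul 2), integral_const_mul, horth, integral_const,
            mul_zero, add_zero, smul_eq_mul]
      _ ≤ ((n + 1 : ℕ) : ℝ) * (μ.real Set.univ * C ^ 2) := by push_cast; linarith

/- The second moments of `f (k ^ 2) / k ^ 2` are `O(1 / k ^ 2)`, hence summable, which gives
convergence along the squares; the bounded increments fill the gaps between consecutive squares. -/
theorem ae_tendsto_div_natCast_of_martingale (hf : Martingale f ℱ μ)
    (hC : ∀ n, ∀ᵐ ω ∂μ, |f (n + 1) ω - f n ω| ≤ C) :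
    ∀ᵐ ω ∂μ, Tendsto (fun n : ℕ => f n ω / n) atTop (𝓝 0) := by
  have hg : Martingale (fun n => f n - f 0) ℱ μ :=
    hf.sub (martingale_const_fun ℱ μ (hf.stronglyMeasurable 0) (hf.integrable 0))
  have hg0 : f 0 - f 0 =ᵐ[μ] 0 := by simp
  have hgC : ∀ n, ∀ᵐ ω ∂μ, |(f (n + 1) - f 0) ω - (f n - f 0) ω| ≤ C := by simpa using hC
  have hint (n : ℕ) : Integrable (fun ω => (f n ω - f 0 ω) ^ 2) μ :=
    integrable_sq_of_ae_abs_le (hg.integrable n).aestronglyMeasurable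
      (ae_abs_le_of_ae_abs_sub_le (f := fun n => f n - f 0) hg0 hgC n)
  have hmoment (n : ℕ) : ∫ ω, (f n ω - f 0 ω) ^ 2 ∂μ ≤ n * (μ.real Set.univ * C ^ 2) :=
    integral_sq_le_of_martingale hg hg0 hgC n
  have hsq : ∀ᵐ ω ∂μ, Tendsto (fun k : ℕ => (f (k ^ 2) ω - f 0 ω) / (k : ℝ) ^ 2) atTop (𝓝 0) := by
    refine ae_tendsto_zero_of_summable_integral_sq
      (fun k => by simpa only [div_pow] using (hint (k ^ 2)).div_const _) ?_
    refine .of_nonneg_of_le (fun k => integral_nonneg fun ω => sq_nonneg _) (fun k => ?_)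
      ((Real.summable_one_div_nat_pow.2 one_lt_two).mul_left (μ.real Set.univ * C ^ 2))
    rcases k.eq_zero_or_pos with rfl | hk
    · simp
    simp only [div_pow, integral_div]
    rw [mul_one_div, div_le_div_iff₀ (by positivity) (by positivity)]
    calc (∫ ω, (f (k ^ 2) ω - f 0 ω) ^ 2 ∂μ) * (k : ℝ) ^ 2
        ≤ ((k ^ 2 : ℕ) * (μ.real Set.univ * C ^ 2)) * (k : ℝ) ^ 2 := by gcongr; exact hmoment _
      _ = μ.real Set.univ * C ^ 2 * (k ^ 2) ^ 2 := by push_cast; ring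
  filter_upwards [hsq, ae_all_iff.2 hC] with ω hω hCω
  have hdiff : Tendsto (fun n : ℕ => (f n ω - f 0 ω) / n) atTop (𝓝 0) :=
    tendsto_div_natCast_of_tendsto_sq (C := C)
      (fun n => by simpa using (abs_le.1 (hCω n)).1) hω
  simpa [sub_div] using hdiff.add (tendsto_const_div_atTop_nhds_zero_nat (f 0 ω))

end StrongLaw

section WalkLaw

theorem setIntegral_preimage_eq_zero_of_forall_singleton {Ω β : Type*} {m0 : MeasurableSpace Ω}
    {μ : Measure Ω} [MeasurableSpace β] [MeasurableSingletonClass β] [Countable β] {H : Ω → β}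
    (hH : Measurable H) {g : Ω → ℝ} (hg : Integrable g μ)
    (h : ∀ b, ∫ ω in H ⁻¹' {b}, g ω ∂μ = 0) (S : Set β) : ∫ ω in H ⁻¹' S, g ω ∂μ = 0 := by
  have hS : H ⁻¹' S = ⋃ b : S, H ⁻¹' {b.1} := by
    rw [← Set.preimage_iUnion, Set.iUnion_singleton_eq_range, Subtype.range_coe]
  have hdisj : Pairwise (Function.onFun Disjoint fun b : S => H ⁻¹' {b.1}) := fun b c hbc =>
    Disjoint.preimage H (by simpa [Subtype.coe_inj] using hbc)
  rw [hS, integral_iUnion (s := fun b : S => H ⁻¹' {b.1})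
    (fun b => hH (measurableSet_singleton b.1)) hdisj hg.integrableOn]
  simp [h]

theorem ae_of_forall_measure_cylinder_eq_zero {E : Type*} [TopologicalSpace E]
    [DiscreteTopology E] [SecondCountableTopology E] [MeasurableSpace E] {μ : Measure (ℕ → E)}
    {Q : (ℕ → E) → Prop} (h : ∀ x, ¬Q x → ∃ n, μ (PiNat.cylinder x n) = 0) : ∀ᵐ ω ∂μ, Q ω :=
  measure_null_of_locally_null _ fun x hx =>
    (h x hx).imp' (PiNat.cylinder x) fun n hn => ⟨mem_nhdsWithin_of_mem_nhds <|
      (PiNat.isOpen_cylinder _ x n).mem_nhds (PiNat.self_mem_cylinder x n), hn⟩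

variable {d : ℕ} {p : (Fin d → ℤ) → (Fin d → ℤ) → ℝ} {x₀ : Fin d → ℤ}
  {μ : Measure (ℕ → (Fin d → ℤ))}

theorem IsRWPELaw.measure_cylinder (hμ : IsRWPELaw p x₀ μ) (n : ℕ) (x : ℕ → (Fin d → ℤ)) :
    μ (PiNat.cylinder x (n + 1)) = ENNReal.ofReal ((if x 0 = x₀ then (1 : ℝ) else 0) *
      ∏ i ∈ Finset.range n, p (x i) (x (i + 1) - x i)) := by
  rw [← hμ.2 n x]
  simp only [PiNat.cylinder, Nat.lt_succ_iff]

theorem IsRWPELaw.ae_zero_eq (hμ : IsRWPELaw p x₀ μ) : ∀ᵐ ω ∂μ, ω 0 = x₀ :=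
  ae_of_forall_measure_cylinder_eq_zero fun x hx => ⟨1, by simp [hμ.measure_cylinder 0 x, hx]⟩

theorem IsRWPELaw.ae_jump_ne_zero (hμ : IsRWPELaw p x₀ μ) :
    ∀ᵐ ω ∂μ, ∀ n, p (ω n) (ω (n + 1) - ω n) ≠ 0 :=
  ae_all_iff.2 fun n => ae_of_forall_measure_cylinder_eq_zero fun x hx => ⟨n + 2, by
    rw [hμ.measure_cylinder (n + 1) x, Finset.prod_range_succ, not_not.1 hx, mul_zero, mul_zero,
      ENNReal.ofReal_zero]⟩

theorem IsRWPELaw.measureReal_cylinder_inter (hμ : IsRWPELaw p x₀ μ) (hp : ∀ x y, 0 ≤ p x y)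
    (n : ℕ) (x : ℕ → (Fin d → ℤ)) (z : Fin d → ℤ) :
    μ.real (PiNat.cylinder x (n + 1) ∩ {ω | ω (n + 1) = z}) =
      μ.real (PiNat.cylinder x (n + 1)) * p (x n) (z - x n) := by
  let x' := Function.update x (n + 1) z
  have hx' (i : ℕ) (hi : i ≤ n) : x' i = x i := Function.update_of_ne (by lia) _ _
  have hx'z : x' (n + 1) = z := Function.update_self ..
  have hset : PiNat.cylinder x (n + 1) ∩ {ω | ω (n + 1) = z} = PiNat.cylinder x' (n + 2) := by
    ext ω
    simp only [PiNat.mem_cylinder_iff, Set.mem_inter_iff, Set.mem_ofPred_eq,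
      Nat.forall_lt_succ_right, hx'z, and_congr_left_iff]
    simp +contextual [hx', Nat.le_of_lt]
  have hprod : ∏ i ∈ Finset.range n, p (x' i) (x' (i + 1) - x' i) =
      ∏ i ∈ Finset.range n, p (x i) (x (i + 1) - x i) :=
    Finset.prod_congr rfl fun i hi => by
      have := Finset.mem_range.1 hi
      rw [hx' i this.le, hx' (i + 1) this]
  rw [hset, Measure.real, Measure.real, hμ.measure_cylinder (n + 1), hμ.measure_cylinder n,
    Finset.prod_range_succ, hprod, hx' 0 n.zero_le, hx' n le_rfl, hx'z, ← mul_assoc,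
    ENNReal.ofReal_mul' (hp _ _), ENNReal.toReal_mul, ENNReal.toReal_ofReal (hp _ _)]

theorem IsRWPELaw.setIntegral_cylinder (hμ : IsRWPELaw p x₀ μ) (hp : ∀ x y, 0 ≤ p x y)
    {n : ℕ} {F : (Fin d → ℤ) → ℝ} (hF : Integrable (fun ω => F (ω (n + 1))) μ)
    (x : ℕ → (Fin d → ℤ)) :
    ∫ ω in PiNat.cylinder x (n + 1), F (ω (n + 1)) ∂μ =
      μ.real (PiNat.cylinder x (n + 1)) * ∑' y, p (x n) y * F (x n + y) := by
  have heval : Measurable fun ω : ℕ → (Fin d → ℤ) => ω (n + 1) := measurable_pi_apply _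
  have hF_meas {ν : Measure (Fin d → ℤ)} : AEStronglyMeasurable F ν :=
    (measurable_of_countable F).aestronglyMeasurable
  let κ := (μ.restrict (PiNat.cylinder x (n + 1))).map fun ω => ω (n + 1)
  have hκ (z : Fin d → ℤ) :
      κ.real {z} = μ.real (PiNat.cylinder x (n + 1)) * p (x n) (z - x n) := by
    rw [← hμ.measureReal_cylinder_inter hp, Set.inter_comm,
      map_measureReal_apply heval (measurableSet_singleton z),
      measureReal_restrict_apply (heval (measurableSet_singleton z))]
    rfl
  have hFκ : Integrable F κ := (integrable_map_measure hF_meas heval.aemeasurable).2 hF.restrict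
  rw [← integral_map heval.aemeasurable hF_meas, integral_countable hFκ, ← tsum_mul_left,
    ← (Equiv.addLeft (x n)).tsum_eq]
  simp [κ, hκ, mul_assoc]

open Preorder in
theorem IsRWPELaw.martingale (hμ : IsRWPELaw p x₀ μ) (hp : ∀ x y, 0 ≤ p x y)
    {f : ℕ → (Fin d → ℤ) → ℝ} (hint : ∀ n, Integrable (fun ω => f n (ω n)) μ)
    (hf : ∀ n x, ∑' y, p x y * f (n + 1) (x + y) = f n x) :
    Martingale (fun n ω => f n (ω n)) Filtration.piLE μ := by
  have := hμ.1
  let H (n : ℕ) : (ℕ → (Fin d → ℤ)) → Finset.Iic n → (Fin d → ℤ) := frestrictLe n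
  refine martingale_of_setIntegral_eq_succ (fun n => ?_) hint fun n s hs => ?_
  · rw [Filtration.piLE_eq_comap_frestrictLe]
    exact ((measurable_of_countable fun c : Finset.Iic n → (Fin d → ℤ) =>
      f n (c ⟨n, Finset.mem_Iic.2 le_rfl⟩)).comp (comap_measurable (H n))).stronglyMeasurable
  rw [Filtration.piLE_eq_comap_frestrictLe] at hs
  obtain ⟨S, -, rfl⟩ := hs
  rw [← sub_eq_zero, ← integral_sub (hint n).integrableOn (hint (n + 1)).integrableOn]
  refine setIntegral_preimage_eq_zero_of_forall_singleton (measurable_frestrictLe n)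
    ((hint n).sub (hint (n + 1))) (fun c => ?_) S
  obtain ⟨x, rfl⟩ : ∃ x, H n x = c := Subtype.val_injective.surjective_comp_right c
  have hfiber : H n ⁻¹' {H n x} = PiNat.cylinder x (n + 1) := by
    ext ω
    simp [H, PiNat.mem_cylinder_iff, funext_iff]
  have hnow : ∫ ω in PiNat.cylinder x (n + 1), f n (ω n) ∂μ =
      μ.real (PiNat.cylinder x (n + 1)) * f n (x n) := by
    rw [setIntegral_congr_fun (g := fun _ => f n (x n))
      (PiNat.isOpen_cylinder _ x (n + 1)).measurableSet
      fun ω hω => congrArg (f n) (hω n n.lt_succ_self), setIntegral_const, smul_eq_mul]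
  rw [hfiber, integral_sub' (hint n).integrableOn (hint (n + 1)).integrableOn, hnow,
    hμ.setIntegral_cylinder hp (hint (n + 1)), hf, sub_self]

/- The chain only sees jumps of positive probability, so along it the martingale `f n (X n)` has
increments bounded by `C`. -/
theorem IsRWPELaw.ae_tendsto_div_natCast (hμ : IsRWPELaw p x₀ μ) (hp : ∀ x y, 0 ≤ p x y)
    {f : ℕ → (Fin d → ℤ) → ℝ} {C : ℝ} (hf : ∀ n x, ∑' y, p x y * f (n + 1) (x + y) = f n x)
    (hC : ∀ n x y, p x y ≠ 0 → |f (n + 1) (x + y) - f n x| ≤ C) :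
    ∀ᵐ ω ∂μ, Tendsto (fun n : ℕ => f n (ω n) / n) atTop (𝓝 0) := by
  have := hμ.1
  have hstep : ∀ n, ∀ᵐ ω ∂μ, |f (n + 1) (ω (n + 1)) - f n (ω n)| ≤ C := fun n => by
    filter_upwards [hμ.ae_jump_ne_zero] with ω hω
    simpa using hC n (ω n) _ (hω n)
  have hint (n : ℕ) : Integrable (fun ω => f n (ω n)) μ := by
    have hmeas (n : ℕ) : Measurable fun ω : ℕ → (Fin d → ℤ) => f n (ω n) :=
      (measurable_of_countable (f n)).comp (measurable_pi_apply n)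
    induction n with
    | zero =>
      refine .of_bound (hmeas 0).aestronglyMeasurable |f 0 x₀| ?_
      filter_upwards [hμ.ae_zero_eq] with ω hω
      simp [hω]
    | succ n ih =>
      have hincr : Integrable (fun ω => f (n + 1) (ω (n + 1)) - f n (ω n)) μ :=
        .of_bound ((hmeas (n + 1)).sub (hmeas n)).aestronglyMeasurable C (hstep n)
      exact (ih.add hincr).congr (ae_of_all _ fun ω => by simp)
  exact ae_tendsto_div_natCast_of_martingale (hμ.martingale hp hint hf) hstep

end WalkLaw

section Lattice

variable {d : ℕ}

theorem isUnitVec_single (i : Fin d) : IsUnitVec (Pi.single i 1) := ⟨i, .inl rfl⟩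

theorem IsUnitVec.neg {e : Fin d → ℤ} (he : IsUnitVec e) : IsUnitVec (-e) := by
  obtain ⟨i, rfl | rfl⟩ := he
  · exact ⟨i, .inr rfl⟩
  · exact ⟨i, .inl (neg_neg _)⟩

theorem closure_isUnitVec : AddSubmonoid.closure {e : Fin d → ℤ | IsUnitVec e} = ⊤ := by
  refine eq_top_iff.2 fun x _ => ?_
  rw [← Finset.univ_sum_single x]
  have hmem {e : Fin d → ℤ} (he : IsUnitVec e) :
      e ∈ AddSubmonoid.closure {e : Fin d → ℤ | IsUnitVec e} := AddSubmonoid.subset_closure he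
  refine sum_mem fun i _ => ?_
  obtain ⟨n, hn | hn⟩ := (x i).eq_nat_or_neg
  · have : Pi.single i (x i) = n • (Pi.single i 1 : Fin d → ℤ) := by
      rw [← Pi.single_smul, hn, nsmul_eq_mul, mul_one]
    exact this ▸ nsmul_mem (hmem (isUnitVec_single i)) n
  · have : Pi.single i (x i) = n • (-Pi.single i 1 : Fin d → ℤ) := by
      rw [← Pi.single_neg, ← Pi.single_smul, hn, nsmul_eq_mul, mul_neg_one]
    exact this ▸ nsmul_mem (hmem (isUnitVec_single i).neg) n

theorem IsUnitVec.abs_apply_le_one {e : Fin d → ℤ} (he : IsUnitVec e) (i : Fin d) :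
    |(e i : ℝ)| ≤ 1 := by
  obtain ⟨j, rfl | rfl⟩ := he <;> rcases eq_or_ne i j with rfl | hij <;> simp [*]

theorem sum_mul_single (g : Fin d → ℝ) (i : Fin d) (m : ℤ) :
    ∑ j, g j * ((Pi.single i m : Fin d → ℤ) j : ℝ) = g i * m := by
  simp [Pi.single_apply]

variable {Md : Fin d → ℕ}

theorem projT_zero : projT Md 0 = 0 := by
  ext i; simp [projT]

theorem projT_add (x y : Fin d → ℤ) : projT Md (x + y) = projT Md x + projT Md y := by
  ext i; simp [projT]

theorem projT_neg (x : Fin d → ℤ) : projT Md (-x) = -projT Md x := by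
  ext i; simp [projT]

theorem projT_single_period (i : Fin d) : projT Md (Pi.single i (Md i : ℤ)) = 0 := by
  ext j
  rcases eq_or_ne j i with rfl | hj <;> simp [projT, *]

theorem projT_repT [∀ i, NeZero (Md i)] (a : Torus d Md) : projT Md (repT Md a) = a := by
  ext i; simp [projT, repT]

theorem eq_of_projT_eq {β : Type*} {f : (Fin d → ℤ) → β}
    (hf : ∀ i, Function.Periodic f (Pi.single i (Md i : ℤ))) {x y : Fin d → ℤ}
    (hxy : projT Md x = projT Md y) : f x = f y := by
  have hdvd (i : Fin d) : (Md i : ℤ) ∣ x i - y i :=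
    (ZMod.intCast_eq_intCast_iff_dvd_sub _ _ _).1 (congrFun hxy i).symm
  choose k hk using hdvd
  have hdiff : x - y = ∑ i, k i • (Pi.single i (Md i : ℤ) : Fin d → ℤ) := by
    rw [← Finset.univ_sum_single (x - y)]
    refine Finset.sum_congr rfl fun i _ => ?_
    rw [← Pi.single_smul, Pi.sub_apply, hk, smul_eq_mul, mul_comm]
  have hper : Function.Periodic f (x - y) := by
    rw [hdiff]
    exact Finset.sum_induction _ (Function.Periodic f) (fun _ _ => .add_period)
      (fun z => by rw [add_zero]) fun i _ => (hf i).zsmul (k i)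
  simpa using hper y

theorem eq_of_forall_add_isUnitVec {β : Type*} {f : (Fin d → ℤ) → β}
    (hf : ∀ x e, IsUnitVec e → f (x + e) = f x) (x y : Fin d → ℤ) : f x = f y :=
  eq_of_projT_eq (Md := fun _ => 1) (fun i x => hf x _ (isUnitVec_single i)) (Subsingleton.elim _ _)

end Lattice

section InducedChain

variable {d : ℕ} {Md : Fin d → ℕ} {p : (Fin d → ℤ) → (Fin d → ℤ) → ℝ}

theorem IsPeriodicEnv.periodic (henv : IsPeriodicEnv Md p) (i : Fin d) :
    Function.Periodic p (Pi.single i (Md i : ℤ)) :=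
  fun x => funext fun y => henv.2.2 x y i

theorem IsPeriodicEnv.summable_mul_of_bounded (henv : IsPeriodicEnv Md p) (x : Fin d → ℤ)
    {F : (Fin d → ℤ) → ℝ} {C : ℝ} (hF : ∀ y, p x y ≠ 0 → |F y| ≤ C) :
    Summable fun y => p x y * F y := by
  refine ((henv.2.1 x).summable.mul_right C).of_norm_bounded fun y => ?_
  rw [Real.norm_eq_abs, abs_mul, abs_of_nonneg (henv.1 x y)]
  rcases eq_or_ne (p x y) 0 with h | h
  · simp [h]
  · exact mul_le_mul_of_nonneg_left (hF y h) (henv.1 x y)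

variable [∀ i, NeZero (Md i)]

theorem IsPeriodicEnv.apply_repT_projT (henv : IsPeriodicEnv Md p) (x : Fin d → ℤ) :
    p (repT Md (projT Md x)) = p x :=
  eq_of_projT_eq henv.periodic (projT_repT _)

theorem IsPeriodicEnv.hasSum_mulVec (henv : IsPeriodicEnv Md p) (f : Torus d Md → ℝ)
    (a : Torus d Md) :
    HasSum (fun y => p (repT Md a) y * f (a + projT Md y)) ((indMatrix Md p *ᵥ f) a) := by
  have hterm (b : Torus d Md) : HasSum
      (fun y => (if a + projT Md y = b then p (repT Md a) y else 0) * f b)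
      (indMatrix Md p a b * f b) := by
    refine (Summable.hasSum ?_).mul_right _
    refine (henv.2.1 (repT Md a)).summable.of_nonneg_of_le (fun y => ?_) fun y => ?_ <;>
      split_ifs <;> simp [henv.1]
  refine (hasSum_sum fun b _ => hterm b).congr_fun fun y => ?_
  simp

theorem IsPeriodicEnv.indMatrix_mem_rowStochastic (henv : IsPeriodicEnv Md p) :
    indMatrix Md p ∈ Matrix.rowStochastic ℝ (Torus d Md) := by
  refine ⟨fun a b => tsum_nonneg fun y => by split_ifs <;> simp [henv.1], funext fun a => ?_⟩
  exact (henv.hasSum_mulVec 1 a).unique (by simpa using henv.2.1 (repT Md a))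

theorem IsPeriodicEnv.le_indMatrix (henv : IsPeriodicEnv Md p) (a : Torus d Md)
    (y : Fin d → ℤ) : p (repT Md a) y ≤ indMatrix Md p a (a + projT Md y) := by
  have h := henv.hasSum_mulVec (Pi.single (a + projT Md y) 1) a
  rw [Matrix.mulVec_single_one] at h
  have hsingle : 0 ≤ (Pi.single (a + projT Md y) 1 : Torus d Md → ℝ) :=
    Pi.single_nonneg.2 zero_le_one
  simpa using le_hasSum h y fun z _ => mul_nonneg (henv.1 _ z) (hsingle _)

theorem IsPeriodicEnv.matIrreducible_indMatrix (henv : IsPeriodicEnv Md p)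
    (hpos : ∀ x e, IsUnitVec e → 0 < p x e) : MatIrreducible (indMatrix Md p) := by
  have hP := henv.indMatrix_mem_rowStochastic
  have hstep {n : ℕ} {a b c : Torus d Md} (hac : 0 < indMatrix Md p a c)
      (hcb : 0 < (indMatrix Md p ^ n) c b) : 0 < (indMatrix Md p ^ (n + 1)) a b := by
    rw [pow_succ', Matrix.mul_apply]
    exact Finset.sum_pos' (fun c _ => mul_nonneg (Matrix.nonneg_of_mem_rowStochastic hP)
      (Matrix.nonneg_of_mem_rowStochastic (pow_mem hP n))) ⟨c, Finset.mem_univ _, mul_pos hac hcb⟩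
  have hreach (x : Fin d → ℤ) (a : Torus d Md) :
      ∃ n, 0 < (indMatrix Md p ^ n) a (a + projT Md x) := by
    have hx : x ∈ AddSubmonoid.closure {e : Fin d → ℤ | IsUnitVec e} := by
      simp [closure_isUnitVec]
    induction hx using AddSubmonoid.closure_induction_left generalizing a with
    | zero => exact ⟨0, by simp [projT_zero]⟩
    | add_left e he y _ ih =>
      obtain ⟨n, hn⟩ := ih (a + projT Md e)
      rw [projT_add, ← add_assoc]
      exact ⟨n + 1, hstep ((hpos _ e he).trans_le (henv.le_indMatrix a e)) hn⟩
  intro a b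
  obtain ⟨c, -, hc⟩ : ∃ c ∈ Finset.univ, 0 < indMatrix Md p a c :=
    Finset.exists_lt_of_sum_lt (f := fun _ => 0) (by simp [Matrix.sum_row_of_mem_rowStochastic hP])
  obtain ⟨n, hn⟩ := hreach (repT Md (b - c)) c
  rw [projT_repT, add_sub_cancel] at hn
  exact ⟨n + 1, n.succ_pos, hstep hc hn⟩

end InducedChain

section LawOfLargeNumbers

variable {d : ℕ} {Md : Fin d → ℕ} [∀ i, NeZero (Md i)] {p : (Fin d → ℤ) → (Fin d → ℤ) → ℝ}
  {π : Torus d Md → ℝ}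

theorem tendsto_comp_div_natCast_of_finite {T : Type*} [Finite T] (φ : T → ℝ) (t : ℕ → T) :
    Tendsto (fun n : ℕ => φ (t n) / n) atTop (𝓝 0) := by
  obtain ⟨K, hK⟩ := Finite.exists_le fun a => |φ a|
  exact tendsto_bdd_div_atTop_nhds_zero
    (.of_forall fun n => (abs_le.1 (hK (t n))).1) (.of_forall fun n => (abs_le.1 (hK (t n))).2)
    tendsto_natCast_atTop_atTop

theorem IsPeriodicEnv.hasSum_mul_coord_add (henv : IsPeriodicEnv Md p) {ψ : Torus d Md → ℝ}
    {i : Fin d} {x : Fin d → ℤ} {c : ℝ} (hsum : Summable fun y => p x y * (y i : ℝ))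
    (hψ : ψ (projT Md x) - (indMatrix Md p *ᵥ ψ) (projT Md x) = ∑' y, p x y * (y i : ℝ) - c) :
    HasSum (fun y => p x y * (((x + y) i : ℤ) + ψ (projT Md (x + y))))
      (x i + ψ (projT Md x) + c) := by
  have hcorr := henv.hasSum_mulVec ψ (projT Md x)
  rw [henv.apply_repT_projT] at hcorr
  have htotal := (((henv.2.1 x).mul_right (x i : ℝ)).add hsum.hasSum).add hcorr
  have hvalue : x i + ψ (projT Md x) + c =
      1 * (x i : ℝ) + ∑' y, p x y * (y i : ℝ) + (indMatrix Md p *ᵥ ψ) (projT Md x) := by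
    linear_combination hψ
  rw [hvalue]
  refine htotal.congr_fun fun y => ?_
  rw [projT_add, Pi.add_apply, Int.cast_add]
  ring

theorem IsPeriodicEnv.ae_tendsto_coord_div (henv : IsPeriodicEnv Md p)
    (hirr : MatIrreducible (indMatrix Md p)) (hπ : IsStationaryDist (indMatrix Md p) π)
    {x₀ : Fin d → ℤ} {μ : Measure (ℕ → (Fin d → ℤ))} (hμ : IsRWPELaw p x₀ μ) {i : Fin d} {R : ℝ}
    (hR : ∀ x y, p x y ≠ 0 → |(y i : ℝ)| ≤ R) :
    ∀ᵐ ω ∂μ, Tendsto (fun n : ℕ => (ω n i : ℝ) / n) atTop (𝓝 (driftVec Md p π i)) := by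
  let ν := driftVec Md p π i
  obtain ⟨ψ, hψ⟩ : ∃ ψ : Torus d Md → ℝ, ∀ a, ψ a - (indMatrix Md p *ᵥ ψ) a =
      ∑' y, p (repT Md a) y * (y i : ℝ) - ν :=
    hπ.exists_poisson_solution henv.indMatrix_mem_rowStochastic hirr _
  obtain ⟨K, hK⟩ := Finite.exists_le fun a => |ψ a|
  let f (n : ℕ) (x : Fin d → ℤ) : ℝ := x i + ψ (projT Md x) - n * ν
  have hharm (n : ℕ) (x : Fin d → ℤ) : ∑' y, p x y * f (n + 1) (x + y) = f n x := by
    have hcoord := henv.hasSum_mul_coord_add (henv.summable_mul_of_bounded x (hR x))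
      (by simpa only [henv.apply_repT_projT] using hψ (projT Md x))
    have hsum := hcoord.sub ((henv.2.1 x).mul_right ((n + 1 : ℕ) * ν))
    simp only [f, mul_sub, hsum.tsum_eq]
    push_cast
    ring
  have hincr (n : ℕ) (x y : Fin d → ℤ) (hy : p x y ≠ 0) :
      |f (n + 1) (x + y) - f n x| ≤ R + K + K + |ν| := by
    have : f (n + 1) (x + y) - f n x = y i + ψ (projT Md (x + y)) - ψ (projT Md x) - ν := by
      simp only [f, Pi.add_apply]
      push_cast
      ring
    rw [this]
    refine (abs_sub _ _).trans (add_le_add_left ((abs_sub _ _).trans ?_) _)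
    exact add_le_add ((abs_add_le _ _).trans (add_le_add (hR x y hy) (hK _))) (hK _)
  filter_upwards [hμ.ae_tendsto_div_natCast henv.1 hharm hincr] with ω hω
  have hlim := (hω.sub (tendsto_comp_div_natCast_of_finite ψ fun n => projT Md (ω n))).add_const ν
  rw [sub_zero, zero_add] at hlim
  refine hlim.congr' ?_
  filter_upwards [eventually_ne_atTop 0] with n hn
  have : (n : ℝ) ≠ 0 := by exact_mod_cast hn
  simp only [f]
  field_simp
  ring

end LawOfLargeNumbers

/-- `u` is a potential of the nearest-neighbour environment `p`: its decrements are the log-ratios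
of the two opposite jump probabilities across each edge of `ℤ^d`. This determines `u` up to an
additive constant. -/
def IsPotential {d : ℕ} (p : (Fin d → ℤ) → (Fin d → ℤ) → ℝ) (u : (Fin d → ℤ) → ℝ) : Prop :=
  ∀ x e, IsUnitVec e → u x - u (x + e) = Real.log (p x e / p (x + e) (-e))

section Potential

variable {d : ℕ} {Md : Fin d → ℕ} [∀ i, NeZero (Md i)] {p : (Fin d → ℤ) → (Fin d → ℤ) → ℝ}
  {u : (Fin d → ℤ) → ℝ}

theorem IsPotential.apply_single_period (hu : IsPotential p u) (i : Fin d) :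
    u (Pi.single i (Md i : ℤ)) = u 0 - avgNegGrad Md p i * Md i := by
  have hstep (j : ℕ) : u (Pi.single i (j : ℤ)) - u (Pi.single i ((j + 1 : ℕ) : ℤ)) =
      Real.log (p (Pi.single i (j : ℤ)) (Pi.single i 1) /
        p (Pi.single i ((j : ℤ) + 1)) (-Pi.single i 1)) := by
    simpa only [← Pi.single_add, Nat.cast_succ] using
      hu (Pi.single i (j : ℤ)) _ (isUnitVec_single i)
  have hMd : (Md i : ℝ) ≠ 0 := NeZero.ne _
  have hsum := Finset.sum_range_sub' (fun j : ℕ => u (Pi.single i (j : ℤ))) (Md i)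
  simp only [hstep, Nat.cast_zero, Pi.single_zero] at hsum
  rw [avgNegGrad, hsum]
  field_simp
  ring

theorem IsPotential.exists_periodic_add_linear (hu : IsPotential p u)
    (hper : ∀ i, Function.Periodic p (Pi.single i (Md i : ℤ))) :
    ∃ φ : Torus d Md → ℝ, ∀ x, u x = φ (projT Md x) - ∑ i, avgNegGrad Md p i * x i := by
  let w (x : Fin d → ℤ) : ℝ := u x + ∑ i, avgNegGrad Md p i * x i
  have hw (i : Fin d) : Function.Periodic w (Pi.single i (Md i : ℤ)) := by
    have hshift (x e : Fin d → ℤ) (he : IsUnitVec e) :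
        u (x + e + Pi.single i (Md i : ℤ)) - u (x + e) =
          u (x + Pi.single i (Md i : ℤ)) - u x := by
      have h := hu (x + Pi.single i (Md i : ℤ)) e he
      rw [add_right_comm, hper i, hper i, ← hu x e he] at h
      linarith
    intro x
    have hconst := eq_of_forall_add_isUnitVec
      (f := fun x => u (x + Pi.single i (Md i : ℤ)) - u x) hshift x 0
    have hperiod := hu.apply_single_period (Md := Md) i
    simp only [zero_add] at hconst
    simp only [w, Pi.add_apply, Int.cast_add, mul_add, Finset.sum_add_distrib, sum_mul_single,
      Int.cast_natCast]
    linarith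
  refine ⟨fun a => w (repT Md a), fun x => ?_⟩
  have hrep : w (repT Md (projT Md x)) = w x := eq_of_projT_eq hw (projT_repT _)
  simp only [hrep, w, add_sub_cancel_right]

end Potential

/-- The finite set of the `2d` unit vectors of `ℤ^d`, used to turn sums over jumps of a
nearest-neighbour environment into finite sums. -/
def unitVecs (d : ℕ) : Finset (Fin d → ℤ) :=
  Finset.univ.image (fun i => Pi.single i 1) ∪ Finset.univ.image fun i => -Pi.single i 1

theorem mem_unitVecs {d : ℕ} {e : Fin d → ℤ} : e ∈ unitVecs d ↔ IsUnitVec e := by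
  simp [unitVecs, IsUnitVec, exists_or, eq_comm]

theorem IsNearestNeighbour.tsum_mul_eq_sum {d : ℕ} {p : (Fin d → ℤ) → (Fin d → ℤ) → ℝ}
    (hnn : IsNearestNeighbour p) (x : Fin d → ℤ) (F : (Fin d → ℤ) → ℝ) :
    ∑' y, p x y * F y = ∑ e ∈ unitVecs d, p x e * F e :=
  tsum_eq_sum fun y hy => by
    rw [not_imp_comm.1 (hnn x y) (mem_unitVecs.not.1 hy), zero_mul]

section EntropyProduction

variable {d : ℕ} {Md : Fin d → ℕ}

/-- The orientation reversal of the edges of the torus: the edge from `a` in the direction `e`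
becomes the edge from `a + e` in the direction `-e`. -/
def edgeReversal (Md : Fin d → ℕ) (s : Torus d Md × (Fin d → ℤ)) : Torus d Md × (Fin d → ℤ) :=
  (s.1 + projT Md s.2, -s.2)

theorem edgeReversal_involutive : Function.Involutive (edgeReversal Md) := fun s => by
  simp [edgeReversal, projT_neg]

variable [∀ i, NeZero (Md i)] {p : (Fin d → ℤ) → (Fin d → ℤ) → ℝ} {π : Torus d Md → ℝ}
  {u : (Fin d → ℤ) → ℝ}

/-- The probability flow through the oriented edges of the torus: the edge `(a, e)` carries the
mass which the chain with distribution `π` sends from `a` in the direction `e`. -/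
def edgeFlow (Md : Fin d → ℕ) [∀ i, NeZero (Md i)] (p : (Fin d → ℤ) → (Fin d → ℤ) → ℝ)
    (π : Torus d Md → ℝ) (s : Torus d Md × (Fin d → ℤ)) : ℝ :=
  π s.1 * p (repT Md s.1) s.2

theorem sum_edgeFlow_edgeReversal :
    ∑ s ∈ Finset.univ ×ˢ unitVecs d, edgeFlow Md p π (edgeReversal Md s) =
      ∑ s ∈ Finset.univ ×ˢ unitVecs d, edgeFlow Md p π s := by
  refine Finset.sum_equiv edgeReversal_involutive.toPerm (fun s => ?_) fun _ _ => rfl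
  have hneg (e : Fin d → ℤ) : IsUnitVec (-e) ↔ IsUnitVec e :=
    ⟨fun h => neg_neg e ▸ h.neg, .neg⟩
  simp [edgeReversal, mem_unitVecs, hneg]

theorem sum_edgeFlow_mul (hnn : IsNearestNeighbour p) (F : Torus d Md → (Fin d → ℤ) → ℝ) :
    ∑ s ∈ Finset.univ ×ˢ unitVecs d, edgeFlow Md p π s * F s.1 s.2 =
      ∑ a, π a * ∑' y, p (repT Md a) y * F a y := by
  simp only [hnn.tsum_mul_eq_sum, Finset.sum_product, edgeFlow, Finset.mul_sum, mul_assoc]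

theorem sum_edgeFlow_mul_sub (henv : IsPeriodicEnv Md p) (hnn : IsNearestNeighbour p)
    (hπ : IsStationaryDist (indMatrix Md p) π) (χ : Torus d Md → ℝ) :
    ∑ s ∈ Finset.univ ×ˢ unitVecs d, edgeFlow Md p π s * (χ s.1 - χ (s.1 + projT Md s.2)) = 0 := by
  have hjump (a : Torus d Md) :
      ∑' y, p (repT Md a) y * (χ a - χ (a + projT Md y)) = χ a - (indMatrix Md p *ᵥ χ) a := by
    simpa only [mul_sub, one_mul] using
      (((henv.2.1 _).mul_right (χ a)).sub (henv.hasSum_mulVec χ a)).tsum_eq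
  have hbalance := hπ.dotProduct_mulVec χ
  simp only [dotProduct] at hbalance
  rw [sum_edgeFlow_mul hnn fun a y => χ a - χ (a + projT Md y)]
  simp only [hjump]
  simp only [mul_sub, Finset.sum_sub_distrib, hbalance, sub_self]

theorem sum_edgeFlow_mul_linear (hnn : IsNearestNeighbour p) (g : Fin d → ℝ) :
    ∑ s ∈ Finset.univ ×ˢ unitVecs d, edgeFlow Md p π s * ∑ i, g i * s.2 i =
      ∑ i, g i * driftVec Md p π i := by
  simp only [driftVec, ← sum_edgeFlow_mul hnn fun _ y => (y _ : ℝ), Finset.mul_sum]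
  rw [Finset.sum_comm]
  exact Finset.sum_congr rfl fun i _ => Finset.sum_congr rfl fun s _ => mul_left_comm _ _ _

theorem exists_log_edgeFlow_div_eq (henv : IsPeriodicEnv Md p)
    (hpos : ∀ x e, IsUnitVec e → 0 < p x e) (hu : IsPotential p u) (hπ : ∀ a, 0 < π a) :
    ∃ χ : Torus d Md → ℝ, ∀ a e, IsUnitVec e →
      Real.log (edgeFlow Md p π (a, e) / edgeFlow Md p π (edgeReversal Md (a, e))) =
        χ a - χ (a + projT Md e) + ∑ i, avgNegGrad Md p i * e i := by
  obtain ⟨φ, hφ⟩ := hu.exists_periodic_add_linear henv.periodic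
  refine ⟨fun a => Real.log (π a) + φ a, fun a e he => ?_⟩
  have hp : p (repT Md (a + projT Md e)) = p (repT Md a + e) := by
    rw [← henv.apply_repT_projT (repT Md a + e), projT_add, projT_repT]
  have hdecr := hu (repT Md a) e he
  simp only [hφ, projT_add, projT_repT, Pi.add_apply, Int.cast_add, mul_add,
    Finset.sum_add_distrib] at hdecr
  rw [edgeFlow, edgeFlow, edgeReversal, hp, mul_div_mul_comm,
    Real.log_mul (div_pos (hπ _) (hπ _)).ne' (div_pos (hpos _ _ he) (hpos _ _ he.neg)).ne',
    Real.log_div (hπ _).ne' (hπ _).ne', ← hdecr]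
  ring

theorem eq_zero_of_forall_sub_add_eq_zero {χ : Torus d Md → ℝ} {g : Fin d → ℝ}
    (h : ∀ a e, IsUnitVec e → χ a - χ (a + projT Md e) + ∑ i, g i * e i = 0) : g = 0 := by
  have hconst := eq_of_forall_add_isUnitVec
    (f := fun x => χ (projT Md x) - ∑ i, g i * x i) fun x e he => by
      have := h (projT Md x) e he
      simp only [projT_add, Pi.add_apply, Int.cast_add, mul_add, Finset.sum_add_distrib]
      linarith
  ext i
  have hi := hconst (Pi.single i (Md i : ℤ)) 0
  simpa [projT_single_period, projT_zero, sum_mul_single, NeZero.ne (Md i)] using hi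

theorem sum_avgNegGrad_mul_driftVec_pos (henv : IsPeriodicEnv Md p) (hnn : IsNearestNeighbour p)
    (hpos : ∀ x e, IsUnitVec e → 0 < p x e) (hu : IsPotential p u)
    (hπ : IsStationaryDist (indMatrix Md p) π) (hπ_pos : ∀ a, 0 < π a)
    (hg : avgNegGrad Md p ≠ 0) : 0 < ∑ i, avgNegGrad Md p i * driftVec Md p π i := by
  obtain ⟨χ, hχ⟩ := exists_log_edgeFlow_div_eq henv hpos hu hπ_pos
  have hmem {s : Torus d Md × (Fin d → ℤ)} (hs : s ∈ Finset.univ ×ˢ unitVecs d) : IsUnitVec s.2 :=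
    mem_unitVecs.1 (Finset.mem_product.1 hs).2
  have hflow (s : Torus d Md × (Fin d → ℤ)) (hs : IsUnitVec s.2) : 0 < edgeFlow Md p π s :=
    mul_pos (hπ_pos _) (hpos _ _ hs)
  have hne : ∃ s ∈ Finset.univ ×ˢ unitVecs d,
      edgeFlow Md p π s ≠ edgeFlow Md p π (edgeReversal Md s) := by
    by_contra! h
    refine hg (eq_zero_of_forall_sub_add_eq_zero (χ := χ) fun a e he => ?_)
    rw [← hχ a e he, ← h (a, e) (by simpa [mem_unitVecs] using he),
      div_self (hflow _ he).ne', Real.log_one]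
  calc 0 < ∑ s ∈ Finset.univ ×ˢ unitVecs d, edgeFlow Md p π s *
        Real.log (edgeFlow Md p π s / edgeFlow Md p π (edgeReversal Md s)) :=
        sum_mul_log_div_pos (fun s hs => (hflow s (hmem hs)).le)
          (fun s hs => hflow _ (hmem hs).neg) sum_edgeFlow_edgeReversal.le hne
    _ = ∑ s ∈ Finset.univ ×ˢ unitVecs d, edgeFlow Md p π s *
        (χ s.1 - χ (s.1 + projT Md s.2) + ∑ i, avgNegGrad Md p i * s.2 i) :=
        Finset.sum_congr rfl fun s hs => by rw [← hχ s.1 s.2 (hmem hs)]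
    _ = ∑ i, avgNegGrad Md p i * driftVec Md p π i := by
        simp only [mul_add, Finset.sum_add_distrib, sum_edgeFlow_mul_sub henv hnn hπ,
          sum_edgeFlow_mul_linear hnn, zero_add]

end EntropyProduction

theorem tendsto_atBot_of_tendsto_div_natCast_neg {a : ℕ → ℝ} {l : ℝ} (hl : l < 0)
    (ha : Tendsto (fun n : ℕ => a n / n) atTop (𝓝 l)) : Tendsto a atTop atBot := by
  refine (tendsto_natCast_atTop_atTop.atTop_mul_neg hl ha).congr' ?_
  filter_upwards [eventually_ne_atTop 0] with n hn
  exact mul_div_cancel₀ _ (by exact_mod_cast hn)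

theorem potential_along_walk_general (d : ℕ) (Md : Fin d → ℕ) [∀ i, NeZero (Md i)]
    (p : (Fin d → ℤ) → (Fin d → ℤ) → ℝ) (henv : IsPeriodicEnv Md p)
    (hnn : IsNearestNeighbour p) (hpos : ∀ x e, IsUnitVec e → 0 < p x e)
    (u : (Fin d → ℤ) → ℝ) (hu : IsPotential p u)
    (π : Torus d Md → ℝ) (hπ : IsStationaryDist (indMatrix Md p) π) (x₀ : Fin d → ℤ)
    (μ : Measure (ℕ → (Fin d → ℤ))) (hμ : IsRWPELaw p x₀ μ) :
    (∀ᵐ ω ∂μ, Tendsto (fun n : ℕ => u (ω n) / n) atTop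
        (𝓝 (-∑ i, avgNegGrad Md p i * driftVec Md p π i))) ∧
    (avgNegGrad Md p ≠ 0 →
      ∀ᵐ ω ∂μ, Tendsto (fun n : ℕ => u (ω n)) atTop atBot) := by
  have hirr := henv.matIrreducible_indMatrix hpos
  have hlln (i : Fin d) := henv.ae_tendsto_coord_div hirr hπ hμ (i := i) (R := 1)
    fun x y hy => (hnn x y hy).abs_apply_le_one i
  obtain ⟨φ, hφ⟩ := hu.exists_periodic_add_linear henv.periodic
  have hlim : ∀ᵐ ω ∂μ, Tendsto (fun n : ℕ => u (ω n) / n) atTop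
      (𝓝 (-∑ i, avgNegGrad Md p i * driftVec Md p π i)) := by
    filter_upwards [ae_all_iff.2 hlln] with ω hω
    have hφ_lim := tendsto_comp_div_natCast_of_finite φ fun n => projT Md (ω n)
    have hlinear := tendsto_finsetSum Finset.univ fun i _ =>
      (hω i).const_mul (avgNegGrad Md p i)
    simpa [hφ, sub_div, Finset.sum_div, mul_div_assoc] using hφ_lim.sub hlinear
  refine ⟨hlim, fun hg => hlim.mono fun ω hω =>
    tendsto_atBot_of_tendsto_div_natCast_neg (neg_neg_of_pos ?_) hω⟩
  exact sum_avgNegGrad_mul_driftVec_pos henv hnn hpos hu hπ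
    (hπ.pos henv.indMatrix_mem_rowStochastic hirr) hg

/-- **Asymptotic decrease of the potential along the walk.** For a reversible
nearest-neighbour RWPE with all one-step probabilities positive, potential `u`,
average negative gradient `g`, aperiodic induced chain (irreducibility is automatic)
with stationary distribution `π` and drift `ν`: `u(Xₙ)/n → -⟨g, ν⟩` almost surely;
in particular, if `g ≠ 0` then `u(Xₙ) → -∞` almost surely. -/
theorem potential_along_walk (d : ℕ) (hd : 0 < d) (Md : Fin d → ℕ)
    [∀ i, NeZero (Md i)]
    (p : (Fin d → ℤ) → (Fin d → ℤ) → ℝ) (henv : IsPeriodicEnv Md p)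
    (hnn : IsNearestNeighbour p) (hpos : ∀ x e, IsUnitVec e → 0 < p x e)
    (u : (Fin d → ℤ) → ℝ) (hu0 : u 0 = 0)
    (hu : ∀ x e, IsUnitVec e → u x - u (x + e) = Real.log (p x e / p (x + e) (-e)))
    (haper : MatAperiodic (indMatrix Md p))
    (π : Torus d Md → ℝ) (hπ : IsStationaryDist (indMatrix Md p) π)
    (μ : Measure (ℕ → (Fin d → ℤ))) (hμ : IsRWPELaw p 0 μ) :
    (∀ᵐ ω ∂μ, Tendsto (fun n : ℕ => u (ω n) / n) atTop
        (𝓝 (-∑ i, avgNegGrad Md p i * driftVec Md p π i))) ∧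
    (avgNegGrad Md p ≠ 0 →
      ∀ᵐ ω ∂μ, Tendsto (fun n : ℕ => u (ω n)) atTop atBot) := by
  exact potential_along_walk_general d Md p henv hnn hpos u hu π hπ 0 μ hμ
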